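/- arXiv:2108.07723 — 3 statements merged into one kernel-verified Lean document; each statement's English description precedes it below -/
import Mathlib

section
/- Let p > 3 be a prime and let d be an integer not divisible by p. Then the permanent of the ((p+1)/2)×((p+1)/2) integer matrix with (j,k)-entry j² + d·k² for 0 ≤ j,k ≤ (p−1)/2 satisfies 24·per[j²+dk²]_{0≤j,k≤(p−1)/2} ≡ (−1)^{(p-1)/2}·p·(d + (d/p))·((p−1)/2)! (mod p²), where (d/p) denotes the Legendre symbol. -/
/-!
For `N = n + 1` with `n = (p - 1) / 2`, the permanent of `[x j + y k]` equals
`∑ r, r! (N - r)! e_r(x) e_{N-r}(y)`, where `e_r` is the `r`-th elementary symmetric function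
(`permanent_add`). Here `x j = j²` and `y k = d k²`.

Modulo `p`, the numbers `0², 1², …, n²` are exactly the roots of `X ^ (n + 1) - X`, so
`e_r(x) ≡ 0` unless `r = 0` or `r = n`, and `e_n(x) ≡ (-1) ^ (n + 1)` (`esymmSq_zmod`). Modulo `p²`
only the terms `r = 1` and `r = n` survive (`e_{n+1}(x) = 0` since `x 0 = 0`), each of the middle
terms being a product of two multiples of `p`. The remaining sum is `n! e_1 e_n (d + d ^ n)`. Finally
`24 e_1 = p (p² - 1)`, and `d ^ n` is congruent to the Legendre symbol by Euler's criterion.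
-/

open Finset Polynomial

/-- The `r`-th elementary symmetric function of the family `x`. -/
def elemSym {N : ℕ} (x : Fin N → ℤ) (r : ℕ) : ℤ :=
  ∑ t ∈ powersetCard r (univ : Finset (Fin N)), ∏ i ∈ t, x i

lemma exists_perm_map {N : ℕ} {s t : Finset (Fin N)} (h : s.card = t.card) :
    ∃ τ : Equiv.Perm (Fin N), s.map τ.toEmbedding = t := by
  classical
  let e : {i // i ∈ s} ≃ {i // i ∈ t} := Finset.equivOfCardEq h
  refine ⟨e.extendSubtype, ?_⟩
  apply Finset.eq_of_subset_of_card_le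
  · intro i hi
    rw [Finset.mem_map] at hi
    obtain ⟨j, hj, rfl⟩ := hi
    exact e.extendSubtype_mem j hj
  · rw [Finset.card_map, h]

lemma sum_perm_congr {N : ℕ} (x : Fin N → ℤ) {s t : Finset (Fin N)} (h : s.card = t.card) :
    ∑ σ : Equiv.Perm (Fin N), ∏ i ∈ s, x (σ i) = ∑ σ : Equiv.Perm (Fin N), ∏ i ∈ t, x (σ i) := by
  obtain ⟨τ, rfl⟩ := exists_perm_map h
  rw [← Equiv.sum_comp (Equiv.mulRight τ)]
  refine Finset.sum_congr rfl fun σ _ => ?_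
  rw [Finset.prod_map]
  rfl

/-- The sum depends on `t` only through its cardinality, so its value follows by averaging over all
`t` of that cardinality. -/
lemma sum_perm_prod {N : ℕ} (x : Fin N → ℤ) (t : Finset (Fin N)) :
    ∑ σ : Equiv.Perm (Fin N), ∏ i ∈ t, x (σ i)
      = (t.card.factorial : ℤ) * ((N - t.card).factorial : ℤ) * elemSym x t.card := by
  have htN : t.card ≤ N := by simpa using t.card_le_univ
  have h1 : ∑ s ∈ powersetCard t.card (univ : Finset (Fin N)),
      ∑ σ : Equiv.Perm (Fin N), ∏ i ∈ s, x (σ i) = (N.factorial : ℤ) * elemSym x t.card := by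
    rw [Finset.sum_comm]
    have : ∀ σ : Equiv.Perm (Fin N), ∑ s ∈ powersetCard t.card (univ : Finset (Fin N)),
        ∏ i ∈ s, x (σ i) = elemSym x t.card := by
      intro σ
      unfold elemSym
      refine Finset.sum_nbij' (fun s => s.map σ.toEmbedding) (fun s => s.map σ.symm.toEmbedding)
        ?_ ?_ ?_ ?_ ?_
      · intro s hs; simpa [mem_powersetCard] using hs
      · intro s hs; simpa [mem_powersetCard] using hs
      · intro s _; ext; simp
      · intro s _; ext; simp
      · intro s _; simp
    simp [this, Fintype.card_perm]
  have h2 : ∑ s ∈ powersetCard t.card (univ : Finset (Fin N)),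
      ∑ σ : Equiv.Perm (Fin N), ∏ i ∈ s, x (σ i)
        = (N.choose t.card : ℤ) * ∑ σ : Equiv.Perm (Fin N), ∏ i ∈ t, x (σ i) := by
    rw [Finset.sum_congr rfl fun s hs => sum_perm_congr x (mem_powersetCard.1 hs).2]
    simp
  have h3 : (N.choose t.card : ℤ) * t.card.factorial * (N - t.card).factorial = N.factorial := by
    exact_mod_cast Nat.choose_mul_factorial_mul_factorial htN
  have h4 : (N.choose t.card : ℤ) ≠ 0 := by
    exact_mod_cast (Nat.choose_pos htN).ne'
  apply mul_left_cancel₀ h4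
  rw [← h2, h1, ← h3]
  ring

lemma permanent_add {N : ℕ} (x y : Fin N → ℤ) :
    (Matrix.of fun j k : Fin N => x j + y k).permanent
      = ∑ r ∈ range (N + 1), (r.factorial : ℤ) * ((N - r).factorial : ℤ)
          * elemSym x r * elemSym y (N - r) := by
  unfold Matrix.permanent
  simp only [Matrix.of_apply, Finset.prod_add]
  rw [Finset.sum_comm, Finset.sum_powerset]
  simp only [Finset.card_univ, Fintype.card_fin]
  refine Finset.sum_congr rfl fun r hr => ?_
  have hrN : r ≤ N := Nat.lt_succ_iff.1 (mem_range.1 hr)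
  rw [elemSym.eq_1 y, Finset.mul_sum]
  refine Finset.sum_nbij' (fun s => sᶜ) (fun s => sᶜ) ?_ ?_ ?_ ?_ ?_
  · intro s hs
    simp only [mem_powersetCard_univ] at hs ⊢
    simp [card_compl, hs]
  · intro s hs
    simp only [mem_powersetCard_univ] at hs ⊢
    simp only [card_compl, hs, Fintype.card_fin]
    omega
  · intro s _; simp
  · intro s _; simp
  · intro s hs
    rw [← Finset.sum_mul, sum_perm_prod, (mem_powersetCard_univ.1 hs), ← compl_eq_univ_sdiff]

lemma elemSym_mul {N : ℕ} (d : ℤ) (x : Fin N → ℤ) (r : ℕ) :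
    elemSym (fun i => d * x i) r = d ^ r * elemSym x r := by
  unfold elemSym
  rw [Finset.mul_sum]
  refine Finset.sum_congr rfl fun t ht => ?_
  rw [Finset.prod_mul_distrib, Finset.prod_const, (mem_powersetCard.1 ht).2]

/-- The elementary symmetric functions of `0², 1², …, n²`. -/
def esymmSq (n r : ℕ) : ℤ := elemSym (fun j : Fin (n + 1) => ((j : ℕ) : ℤ) ^ 2) r

lemma six_mul_esymmSq_one (n : ℕ) : 6 * esymmSq n 1 = n * (n + 1) * (2 * n + 1) := by
  have h : esymmSq n 1 = ∑ i ∈ range (n + 1), (i : ℤ) ^ 2 := by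
    unfold esymmSq elemSym
    rw [powersetCard_one, Finset.sum_map, ← Fin.sum_univ_eq_sum_range (fun i => (i : ℤ) ^ 2)]
    simp
  rw [h]
  clear h
  induction n with
  | zero => simp
  | succ k ih =>
    rw [Finset.sum_range_succ, mul_add, ih]
    push_cast
    ring

lemma esymmSq_top (n : ℕ) : esymmSq n (n + 1) = 0 := by
  have h : powersetCard (n + 1) (univ : Finset (Fin (n + 1))) = {univ} := by
    simpa using powersetCard_self (univ : Finset (Fin (n + 1)))
  rw [esymmSq, elemSym, h, Finset.sum_singleton]
  exact Finset.prod_eq_zero (mem_univ 0) (by simp)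

/-- Both sides are monic of degree `n + 1` and vanish at the `n + 1` distinct squares. -/
lemma prod_X_sub_sq {p n : ℕ} [Fact p.Prime] (hn : p = 2 * n + 1) (hn0 : 0 < n) :
    ∏ j : Fin (n + 1), (X + C (-(((j : ℕ) : ZMod p) ^ 2))) = (X ^ (n + 1) - X : (ZMod p)[X]) := by
  have hinj : Function.Injective (fun j : Fin (n + 1) => ((j : ℕ) : ZMod p) ^ 2) := by
    intro i j hij
    simp only at hij
    rcases sq_eq_sq_iff_eq_or_eq_neg.1 hij with h | h
    · rw [ZMod.natCast_eq_natCast_iff, Nat.ModEq, Nat.mod_eq_of_lt (by omega),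
        Nat.mod_eq_of_lt (by omega)] at h
      exact Fin.ext h
    · have h' : (((i : ℕ) + (j : ℕ) : ℕ) : ZMod p) = 0 := by
        push_cast; rw [h]; ring
      rw [ZMod.natCast_eq_zero_iff] at h'
      have := Nat.eq_zero_of_dvd_of_lt h' (by omega)
      exact Fin.ext (by omega)
  have hm1 : (∏ j : Fin (n + 1), (X + C (-(((j : ℕ) : ZMod p) ^ 2)))).Monic :=
    monic_prod_of_monic _ _ fun j _ => monic_X_add_C _
  have hd1 : (∏ j : Fin (n + 1), (X + C (-(((j : ℕ) : ZMod p) ^ 2)))).degree = ((n + 1 : ℕ) : WithBot ℕ) := by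
    simp only [degree_prod, degree_X_add_C]; simp
  have hdX : (X : (ZMod p)[X]).degree < (X ^ (n + 1) : (ZMod p)[X]).degree := by
    rw [degree_X, degree_X_pow]; exact_mod_cast (by omega : 1 < n + 1)
  have hd2 : (X ^ (n + 1) - X : (ZMod p)[X]).degree = ((n + 1 : ℕ) : WithBot ℕ) := by
    rw [degree_sub_eq_left_of_degree_lt hdX, degree_X_pow]
  have hm2 : (X ^ (n + 1) - X : (ZMod p)[X]).Monic := (monic_X_pow _).sub_of_left hdX
  refine eq_of_degree_sub_lt_of_eval_finset_eq
    (univ.image fun j : Fin (n + 1) => ((j : ℕ) : ZMod p) ^ 2) ?_ ?_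
  · rw [card_image_of_injective _ hinj, card_univ, Fintype.card_fin, ← hd1]
    exact degree_sub_lt_left (hd1.trans hd2.symm) hm1.ne_zero (by rw [hm1, hm2])
  · intro a ha
    obtain ⟨j, -, rfl⟩ := mem_image.1 ha
    rw [eval_prod, Finset.prod_eq_zero (mem_univ j) (by simp)]
    simp only [eval_sub, eval_pow, eval_X]
    have h := ZMod.pow_card ((j : ℕ) : ZMod p)
    rw [← pow_mul, show 2 * (n + 1) = p + 1 by omega, pow_succ, h]
    ring

lemma esymmSq_zmod {p n r : ℕ} [Fact p.Prime] (hn : p = 2 * n + 1) (hn0 : 0 < n)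
    (hr : r ≤ n + 1) :
    (-1) ^ r * (esymmSq n r : ZMod p) = (X ^ (n + 1) - X : (ZMod p)[X]).coeff (n + 1 - r) := by
  rw [← prod_X_sub_sq hn hn0, Finset.prod_X_add_C_coeff _ _ (by simp)]
  simp only [card_univ, Fintype.card_fin]
  rw [show n + 1 - (n + 1 - r) = r by omega, esymmSq, elemSym]
  push_cast
  rw [Finset.mul_sum]
  refine Finset.sum_congr rfl fun t ht => ?_
  rw [Finset.prod_neg, (mem_powersetCard.1 ht).2]

lemma dvd_esymmSq {p n r : ℕ} [Fact p.Prime] (hn : p = 2 * n + 1) (hr0 : 0 < r) (hr : r < n) :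
    (p : ℤ) ∣ esymmSq n r := by
  have h := esymmSq_zmod (r := r) hn (by omega) (by omega)
  rw [coeff_sub, coeff_X_pow, coeff_X, if_neg (by omega), if_neg (by omega), sub_zero] at h
  rw [← ZMod.intCast_zmod_eq_zero_iff_dvd]
  simpa using h

lemma dvd_esymmSq_last {p n : ℕ} [Fact p.Prime] (hn : p = 2 * n + 1) (hn0 : 0 < n) :
    (p : ℤ) ∣ esymmSq n n + (-1) ^ n := by
  have h := esymmSq_zmod (r := n) hn hn0 (by omega)
  rw [coeff_sub, coeff_X_pow, coeff_X, if_neg (by omega), if_pos (by omega), zero_sub] at h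
  rw [← ZMod.intCast_zmod_eq_zero_iff_dvd]
  push_cast
  have h2 : ((-1) ^ n * (-1) ^ n : ZMod p) = 1 := by rw [← mul_pow]; simp
  linear_combination (-1) ^ n * h - (esymmSq n n : ZMod p) * h2

lemma dvd_pow_sub_legendreSym {p n : ℕ} [Fact p.Prime] (hn : p = 2 * n + 1) (d : ℤ) :
    (p : ℤ) ∣ d ^ n - legendreSym p d := by
  rw [← ZMod.intCast_zmod_eq_zero_iff_dvd]
  push_cast
  rw [legendreSym.eq_pow, show p / 2 = n by omega, sub_self]

/-- Let `p > 3` be a prime and `d` an integer not divisible by `p`. Then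
`24 * per [j² + d*k²]_{0 ≤ j,k ≤ (p-1)/2}
  ≡ (-1)^((p-1)/2) * p * (d + (d/p)) * ((p-1)/2)! (mod p²)`,
where `(d/p)` is the Legendre symbol. -/
theorem permanent_sq_add_mul_sq_zero_indexed_mod_p_sq (p : ℕ) [Fact p.Prime] (hp3 : 3 < p)
    (d : ℤ) (hd : ¬ (p : ℤ) ∣ d) :
    24 * (Matrix.of fun j k : Fin ((p - 1) / 2 + 1) =>
        ((j : ℕ) : ℤ) ^ 2 + d * ((k : ℕ) : ℤ) ^ 2).permanent
      ≡ (-1) ^ ((p - 1) / 2) * (p : ℤ) * (d + legendreSym p d)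
          * (Nat.factorial ((p - 1) / 2) : ℤ) [ZMOD (p : ℤ) ^ 2] := by
  obtain ⟨n, hn⟩ : ∃ n, p = 2 * n + 1 :=
    (Fact.out : p.Prime).odd_of_ne_two (by omega)
  rw [show (p - 1) / 2 = n by omega]
  obtain ⟨m, rfl⟩ : ∃ m, n = m + 2 := ⟨n - 2, by omega⟩
  rw [permanent_add (fun j : Fin (m + 2 + 1) => ((j : ℕ) : ℤ) ^ 2)
    (fun k : Fin (m + 2 + 1) => d * ((k : ℕ) : ℤ) ^ 2)]
  simp only [elemSym_mul, ← esymmSq.eq_1]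
  -- The terms `r = 0` and `r = n + 1` vanish; `r = 1` and `r = n` are split off.
  rw [Finset.sum_range_succ, Finset.sum_range_succ, Finset.sum_range_succ', Finset.sum_range_succ']
  simp only [zero_add, Nat.sub_zero, esymmSq_top, Nat.sub_self, mul_zero, zero_mul, add_zero,
    show m + 2 + 1 - 1 = m + 2 by omega, show m + 2 + 1 - (m + 2) = 1 by omega]
  have hmid : (p : ℤ) ^ 2 ∣ ∑ k ∈ range m, ((k + 1 + 1).factorial : ℤ)
      * ((m + 2 + 1 - (k + 1 + 1)).factorial : ℤ) * esymmSq (m + 2) (k + 1 + 1)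
      * (d ^ (m + 2 + 1 - (k + 1 + 1)) * esymmSq (m + 2) (m + 2 + 1 - (k + 1 + 1))) := by
    refine Finset.dvd_sum fun k hk => ?_
    have hk' := mem_range.1 hk
    rw [sq]
    exact mul_dvd_mul ((dvd_esymmSq hn (by omega) (by omega)).mul_left _)
      ((dvd_esymmSq hn (by omega) (by omega)).mul_left _)
  obtain ⟨A, hA⟩ := hmid
  obtain ⟨B, hB⟩ := dvd_esymmSq_last hn (by omega)
  obtain ⟨L, hL⟩ := dvd_pow_sub_legendreSym hn d
  have hpn : (p : ℤ) = 2 * (m + 2 : ℕ) + 1 := by exact_mod_cast hn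
  have h1 : 24 * esymmSq (m + 2) 1 = p * ((p : ℤ) ^ 2 - 1) := by
    have h6 := six_mul_esymmSq_one (m + 2)
    rw [hpn]
    linear_combination 4 * h6
  rw [hA, eq_sub_iff_add_eq.2 hB, eq_add_of_sub_eq hL]
  generalize esymmSq (m + 2) 1 = E at *
  generalize ((m + 2).factorial : ℤ) = F at *
  generalize legendreSym p d = l at *
  generalize ((-1 : ℤ)) ^ (m + 2) = s at *
  generalize (p : ℤ) = q at *
  rw [Int.modEq_iff_dvd]
  simp only [Nat.factorial_one, Nat.cast_one, pow_one, mul_one, one_mul]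
  -- With `24 E = q (q² - 1)`, the difference is an explicit multiple of `q²`.
  refine ⟨-24 * A - s * F * L - F * (q ^ 2 - 1) * B * (d + l + q * L)
    + s * F * q * (d + l + q * L), ?_⟩
  linear_combination -(F * (q * B - s) * (d + l + q * L)) * h1
end

section
/- Let n > 1 be an integer. Then the permanent of the (n−1)×(n−1) real matrix with (j,k)-entry sin(π(j+k)/n) (for 1 ≤ j,k ≤ n−1) equals (−1)^{(n-1)/2}·n!/(2^{n-2}·(n+1)) if n is odd, and equals 0 if n is even. -/
/-!
Put `m = n - 1`, `ω = exp (π i / n)` and `ζ = ω ^ 2`. Then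
`sin (π (a + b) / n) = (i / 2) * ω ^ (b - a) * (ζ ^ (-b) - ζ ^ a)`, and the factors `ω ^ (b - a)`
cancel in every product over a permutation. The permanent is therefore `(i / 2) ^ m` times that
of a matrix of the form `x a + y b`, with `x a = -ζ ^ a` and `y b = ζ ^ (-b)`.

For such matrices the permanent is `∑ r, m! / (m choose r) * e_r(y) * e_{m-r}(x)`, where `e_r`
denotes the elementary symmetric polynomials (`sum_perm_prod_add`). The nontrivial `n`-th roots of
unity are the roots of `1 + X + ⋯ + X ^ m`, so Vieta gives `e_{m-r}(x) = 1` and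
`e_r(y) = (-1) ^ r` (`esymm_neg_roots`, `esymm_roots`). The remaining sum `∑ r, (-1) ^ r /
(m choose r)` telescopes to `(m + 1) / (m + 2) * (1 + (-1) ^ m)` (`alternating_sum_inv_choose`).
-/

open Finset Polynomial in
/-- Vieta's formulas for `1 + X + ⋯ + X ^ m = ∏ (X - z ^ (i + 1))`: every elementary symmetric
polynomial in the negated nontrivial `(m + 1)`-th roots of unity equals `1`. -/
theorem esymm_neg_roots {m : ℕ} {z : ℂ} (hz : IsPrimitiveRoot z (m + 1)) {r : ℕ} (hr : r ≤ m) :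
    ∑ t ∈ powersetCard r (univ : Finset (Fin m)), ∏ i ∈ t, (-z ^ ((i : ℕ) + 1)) = 1 := by
  have hfull : (X ^ (m + 1) - 1 : ℂ[X]) = ∏ i ∈ range (m + 1), (X - C (z ^ i)) := by
    rw [X_pow_sub_one_eq_prod m.succ_pos hz]
    symm
    refine prod_bij (fun i _ => z ^ i) ?_ ?_ ?_ (fun _ _ => rfl)
    · intro i _
      rw [mem_nthRootsFinset m.succ_pos, ← pow_mul, mul_comm, pow_mul, hz.pow_eq_one, one_pow]
    · intro i hi j hj h
      exact hz.pow_inj (mem_range.mp hi) (mem_range.mp hj) h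
    · intro w hw
      obtain ⟨i, hi, h⟩ := hz.eq_pow_of_pow_eq_one ((mem_nthRootsFinset m.succ_pos _).mp hw)
      exact ⟨i, mem_range.mpr hi, h⟩
  have hgeom : ∏ i : Fin m, (X + C (-z ^ ((i : ℕ) + 1))) = ∑ i ∈ range (m + 1), (X : ℂ[X]) ^ i := by
    have hX : (X - 1 : ℂ[X]) ≠ 0 := by simpa using X_sub_C_ne_zero (1 : ℂ)
    apply mul_right_cancel₀ hX
    rw [geom_sum_mul, hfull, prod_range_succ',
      Fin.prod_univ_eq_prod_range (fun i => (X + C (-z ^ (i + 1)) : ℂ[X]))]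
    simp [sub_eq_add_neg]
  have hcoeff := prod_X_add_C_coeff (univ : Finset (Fin m)) (fun i => -z ^ ((i : ℕ) + 1))
    (k := m - r) (by simp)
  rw [hgeom, finsetSum_coeff] at hcoeff
  simp only [coeff_X_pow, sum_ite_eq, mem_range, card_univ, Fintype.card_fin,
    Nat.sub_sub_self hr] at hcoeff
  rw [← hcoeff, if_pos (by lia)]

open Finset in
theorem esymm_roots {m : ℕ} {z : ℂ} (hz : IsPrimitiveRoot z (m + 1)) {r : ℕ} (hr : r ≤ m) :
    ∑ t ∈ powersetCard r (univ : Finset (Fin m)), ∏ i ∈ t, z ^ ((i : ℕ) + 1) = (-1) ^ r := by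
  trans (-1) ^ r * ∑ t ∈ powersetCard r (univ : Finset (Fin m)), ∏ i ∈ t, (-z ^ ((i : ℕ) + 1))
  swap
  · rw [esymm_neg_roots hz hr, mul_one]
  rw [mul_sum]
  refine sum_congr rfl fun t ht => ?_
  rw [prod_neg, (mem_powersetCard.mp ht).2, ← mul_assoc, ← mul_pow]
  simp

open Finset in
/-- The average of `∏ i ∈ T, x (σ i)` over all permutations `σ` is the average of the monomials
of the elementary symmetric polynomial of degree `#T`: the left side depends only on `#T`, and
summing it over all sets of that size gives each monomial once for every `σ`. -/
theorem sum_perm_prod_s11 {ι : Type*} [Fintype ι] [DecidableEq ι] (x : ι → ℂ) (T : Finset ι) :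
    ∑ σ : Equiv.Perm ι, ∏ i ∈ T, x (σ i) =
      (Fintype.card ι).factorial / (Fintype.card ι).choose #T *
        ∑ t ∈ powersetCard #T univ, ∏ i ∈ t, x i := by
  have hconst : ∀ t ∈ powersetCard #T univ,
      ∑ σ : Equiv.Perm ι, ∏ i ∈ t, x (σ i) = ∑ σ : Equiv.Perm ι, ∏ i ∈ T, x (σ i) := by
    intro t ht
    have e : {i // i ∈ T} ≃ {i // i ∈ t} :=
      Finset.equivOfCardEq (mem_powersetCard.mp ht).2.symm
    have himg : T.map e.extendSubtype.toEmbedding = t := by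
      apply eq_of_subset_of_card_le
      · intro j hj
        obtain ⟨i, hi, rfl⟩ := mem_map.mp hj
        exact e.extendSubtype_mem i hi
      · rw [card_map, (mem_powersetCard.mp ht).2]
    conv_rhs => rw [← Equiv.sum_comp (Equiv.mulRight e.extendSubtype)]
    conv_lhs => rw [← himg]
    simp
  have hsum : ∀ σ : Equiv.Perm ι, ∑ t ∈ powersetCard #T univ, ∏ i ∈ t, x (σ i) =
      ∑ t ∈ powersetCard #T univ, ∏ i ∈ t, x i := by
    intro σ
    conv_rhs => rw [← map_univ_equiv σ, powersetCard_map, sum_map]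
    simp [mapEmbedding_apply]
  have hdouble := sum_congr rfl hconst
  rw [sum_comm, sum_congr rfl fun σ _ => hsum σ] at hdouble
  simp only [sum_const, card_univ, Fintype.card_perm, card_powersetCard, nsmul_eq_mul] at hdouble
  have hC : ((Fintype.card ι).choose #T : ℂ) ≠ 0 := by
    exact_mod_cast (Nat.choose_pos (card_le_univ T)).ne'
  rw [div_mul_eq_mul_div, eq_div_iff hC, hdouble, mul_comm]

open Finset in
/-- The permanent of a matrix with entries `x j + y k`, in terms of the elementary symmetric
polynomials of `x` and `y`. -/
theorem sum_perm_prod_add {ι : Type*} [Fintype ι] [DecidableEq ι] (x y : ι → ℂ) :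
    ∑ σ : Equiv.Perm ι, ∏ i, (y i + x (σ i)) =
      ∑ r ∈ range (Fintype.card ι + 1),
        (Fintype.card ι).factorial / (Fintype.card ι).choose r *
        (∑ t ∈ powersetCard r univ, ∏ i ∈ t, y i) *
        ∑ t ∈ powersetCard (Fintype.card ι - r) univ, ∏ i ∈ t, x i := by
  simp_rw [Fintype.prod_add]
  rw [sum_comm]
  simp_rw [← mul_sum, sum_perm_prod_s11]
  rw [← powerset_univ, sum_powerset, card_univ]
  refine sum_congr rfl fun r hr => ?_
  rw [mul_assoc, sum_mul, mul_sum]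
  refine sum_congr rfl fun t ht => ?_
  have hr' : r ≤ Fintype.card ι := by simpa [Nat.lt_succ_iff] using hr
  rw [card_compl, (mem_powersetCard.mp ht).2, Nat.choose_symm hr']
  ring

open Finset in
theorem alternating_sum_inv_choose (m : ℕ) :
    ∑ r ∈ range (m + 1), (-1 : ℂ) ^ r / m.choose r = (m + 1) / (m + 2) * (1 + (-1) ^ m) := by
  -- Telescoping, from `1 / C(m, k) = (m + 1) / (m + 2) * (1 / C(m + 1, k) + 1 / C(m + 1, k + 1))`.
  have hpart : ∀ k ≤ m + 1, ∑ r ∈ range k, (-1 : ℂ) ^ r / m.choose r =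
      (m + 1) / (m + 2) * (1 - (-1) ^ k / (m + 1).choose k) := by
    intro k
    induction k with
    | zero => simp
    | succ k ih =>
      intro hk
      rw [sum_range_succ, ih (by lia)]
      obtain ⟨d, rfl⟩ : ∃ d, m = k + d := ⟨m - k, by lia⟩
      have h1 : ((k + d + 1).choose k : ℂ) * (d + 1) = (k + d + 1) * (k + d).choose k := by
        have := Nat.choose_mul_succ_eq (k + d) k
        rw [show k + d + 1 - k = d + 1 by lia] at this
        have h : (((k + d).choose k * (k + d + 1) : ℕ) : ℂ) = _ := congrArg _ this
        push_cast at h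
        linear_combination -h
      have h2 : ((k + d + 1).choose (k + 1) : ℂ) * (k + 1) = (k + d + 1) * (k + d).choose k := by
        have h : (((k + d + 1) * (k + d).choose k : ℕ) : ℂ) = _ :=
          congrArg _ (Nat.add_one_mul_choose_eq (k + d) k)
        push_cast at h
        linear_combination -h
      have n0 : ((k + d).choose k : ℂ) ≠ 0 := by
        exact_mod_cast (Nat.choose_pos (by lia)).ne'
      have nd : (d + 1 : ℂ) ≠ 0 := by exact_mod_cast d.succ_ne_zero
      have nk : (k + 1 : ℂ) ≠ 0 := by exact_mod_cast k.succ_ne_zero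
      have nm : (k + d + 1 : ℂ) ≠ 0 := by exact_mod_cast (k + d).succ_ne_zero
      have nm2 : (k + d + 2 : ℂ) ≠ 0 := by exact_mod_cast (k + d + 1).succ_ne_zero
      rw [eq_div_of_mul_eq nd h1, eq_div_of_mul_eq nk h2]
      push_cast
      field_simp
      ring
  rw [hpart (m + 1) le_rfl]
  simp [pow_succ]

/-- The sine as a difference of a function of `b` and a function of `a`, up to a constant and a
quotient whose product over the entries picked out by a permutation is `1`. -/
theorem sin_eq_factor {n : ℕ} (hn : n ≠ 0) (a b : ℕ) :
    Complex.sin (Real.pi * ((a + b : ℕ) : ℂ) / n) =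
      Complex.I / 2 * (Complex.exp (Real.pi * Complex.I / n * b) /
        Complex.exp (Real.pi * Complex.I / n * a)) *
      ((Complex.exp (2 * Real.pi * Complex.I / n))⁻¹ ^ b +
        -Complex.exp (2 * Real.pi * Complex.I / n) ^ a) := by
  rw [Complex.sin, ← Complex.exp_neg, ← Complex.exp_nat_mul, ← Complex.exp_nat_mul,
    ← Complex.exp_sub, mul_assoc, mul_add, mul_neg (Complex.exp _), ← Complex.exp_add,
    ← Complex.exp_add]
  have hn' : (n : ℂ) ≠ 0 := by exact_mod_cast hn
  rw [show (Real.pi * Complex.I / n * b - Real.pi * Complex.I / n * a +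
      b * -(2 * Real.pi * Complex.I / n) : ℂ) = -(Real.pi * ((a + b : ℕ) : ℂ) / n) * Complex.I by
    push_cast; field_simp; ring]
  rw [show (Real.pi * Complex.I / n * b - Real.pi * Complex.I / n * a +
      a * (2 * Real.pi * Complex.I / n) : ℂ) = (Real.pi * ((a + b : ℕ) : ℂ) / n) * Complex.I by
    push_cast; field_simp; ring]
  ring

open Finset in
/-- The permanent over `ℂ`, with `n = m + 1` and without separating the parities of `n`. -/
theorem permanent_complex (m : ℕ) :
    ∑ σ : Equiv.Perm (Fin m), ∏ i : Fin m,
      Complex.sin (Real.pi * ((((σ i : ℕ) + 1) + ((i : ℕ) + 1) : ℕ) : ℂ) / (m + 1 : ℕ)) =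
    (Complex.I / 2) ^ m * (m.factorial * ((m + 1) / (m + 2) * (1 + (-1) ^ m))) := by
  have hz := Complex.isPrimitiveRoot_exp (m + 1) m.succ_ne_zero
  set z := Complex.exp (2 * Real.pi * Complex.I / (m + 1 : ℕ)) with hzdef
  have hprod : ∀ σ : Equiv.Perm (Fin m), ∏ i : Fin m,
      Complex.sin (Real.pi * ((((σ i : ℕ) + 1) + ((i : ℕ) + 1) : ℕ) : ℂ) / (m + 1 : ℕ)) =
      (Complex.I / 2) ^ m * ∏ i : Fin m, (z⁻¹ ^ ((i : ℕ) + 1) + -z ^ ((σ i : ℕ) + 1)) := by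
    intro σ
    simp_rw [sin_eq_factor m.succ_ne_zero, prod_mul_distrib, prod_div_distrib]
    rw [Equiv.prod_comp σ fun i : Fin m =>
      Complex.exp (Real.pi * Complex.I / (m + 1 : ℕ) * ((i : ℕ) + 1 : ℕ)),
      div_self (prod_ne_zero_iff.mpr fun _ _ => Complex.exp_ne_zero _)]
    simp only [prod_const, card_univ, Fintype.card_fin, mul_one, div_pow, ← hzdef]
  simp_rw [hprod]
  rw [← mul_sum, sum_perm_prod_add (fun i : Fin m => -z ^ ((i : ℕ) + 1))
    (fun i => z⁻¹ ^ ((i : ℕ) + 1)), ← alternating_sum_inv_choose, Fintype.card_fin]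
  congr 1
  rw [mul_sum]
  refine sum_congr rfl fun r hr => ?_
  rw [esymm_roots hz.inv (Nat.lt_succ_iff.mp (mem_range.mp hr)),
    esymm_neg_roots hz (Nat.sub_le m r)]
  ring

open Real in
/-- Let `n > 1`. The permanent of the `(n-1) × (n-1)` real matrix with `(j,k)`-entry
`sin (π * (j+k) / n)` equals `(-1)^((n-1)/2) * n! / (2^(n-2) * (n+1))` if `n` is odd,
and `0` if `n` is even. -/
theorem permanent_sin_pi_add_div (n : ℕ) (hn : 1 < n) :
    (Matrix.of fun j k : Fin (n - 1) =>
        Real.sin (Real.pi * ((((j : ℕ) + 1) + ((k : ℕ) + 1) : ℕ) : ℝ) / (n : ℝ))).permanent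
      = if Odd n then
          (-1) ^ ((n - 1) / 2) * (Nat.factorial n : ℝ) / (2 ^ (n - 2) * ((n : ℝ) + 1))
        else 0 := by
  obtain ⟨m, rfl⟩ : ∃ m, n = m + 1 := ⟨n - 1, by lia⟩
  apply Complex.ofReal_injective
  have key := permanent_complex m
  simp only [Nat.add_sub_cancel, Matrix.permanent, Matrix.of_apply, Complex.ofReal_sum,
    Complex.ofReal_prod, Complex.ofReal_sin, Complex.ofReal_div, Complex.ofReal_mul,
    Complex.ofReal_natCast]
  refine key.trans ?_
  rcases Nat.even_or_odd m with hm | hm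
  · rw [if_pos hm.add_one]
    obtain ⟨k, rfl⟩ := hm
    obtain ⟨k, rfl⟩ : ∃ l, k = l + 1 := ⟨k - 1, by lia⟩
    rw [show (k + 1 + (k + 1)) / 2 = k + 1 by lia,
      show k + 1 + (k + 1) + 1 - 2 = 2 * k + 1 by lia, Nat.factorial_succ,
      Even.neg_one_pow ⟨k + 1, rfl⟩, ← two_mul, pow_mul, div_pow, Complex.I_sq, neg_div, neg_pow]
    have hk : (k + 2 : ℂ) ≠ 0 := by exact_mod_cast (k + 1).succ_ne_zero
    push_cast
    rw [one_div, inv_pow, ← pow_mul, show (2 * (k + 1) + 2 : ℂ) = 2 * (k + 2) by ring,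
      show (2 * (k + 1) + 1 + 1 : ℂ) = 2 * (k + 2) by ring]
    field_simp
    ring
  · rw [if_neg (by simpa using hm.add_one), hm.neg_one_pow]
    simp
end

section
/- Let p be a prime with p ≡ 3 (mod 4). In the field ℤ/pℤ, every element j² + k² with 1 ≤ j,k ≤ (p−1)/2 is nonzero, and the permanent of the ((p−1)/2)×((p−1)/2) matrix over ℤ/pℤ with (j,k)-entry (j² + k²)^{-1} satisfies 4·(((p+1)/4)!)²·per[(j²+k²)^{-1}]_{1≤j,k≤(p−1)/2} = (−1)^{(p+1)/4} in ℤ/pℤ. -/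
/-!
Put `n = (p - 1) / 2`. The squares `x_j = j²`, `1 ≤ j ≤ n`, are the `n`-th roots of unity in
`ℤ/pℤ`, and `n` is odd. Borchardt's identity
`det [1/(x_j + y_k)] * per [1/(x_j + y_k)] = det [1/(x_j + y_k)²]` (`det_mul_permanent_cauchy`)
reduces the permanent to a quotient of two determinants.

For `n`-th roots of unity with `n` odd, both `1/(x + y)` and `1/(x + y)²` are, up to a power of `y`,
polynomials in `x / y` of degree less than `n`, with `i`-th coefficients `(-1)^i / 2` and
`(-1)^i (2 - n + 2 i) / 4`. Both matrices therefore factor as Vandermonde * diagonal * Vandermonde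
(`det_of_expansion`), and dividing leaves `per = ∏_{i < n} (2 - n + 2 i) / 2`
(`permanent_inv_add_of_pow_eq_one`). With `q = (p + 1) / 4`, each factor is `q + 1 + i` modulo `p`,
so `q! * per = (q + n)!`, which Wilson's theorem evaluates since `(q + n) + (q - 1) = p - 1`.
-/

open Matrix Finset

/-- **Borchardt's identity.** Writing the pair of permutations indexing a term of `det * per` as
`(σ, π * σ)`, the terms with `π` fixed add up to the determinant of the matrix with entries
`1 / ((x r + y c) (x (π r) + y c))`. For `π ≠ 1` its rows, weighted by `x (π r) - x r`, telescope
to zero, so only `π = 1` contributes. -/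
theorem det_mul_permanent_cauchy {ι K : Type*} [Fintype ι] [DecidableEq ι] [Field K]
    (x y : ι → K) (hx : Function.Injective x) (h : ∀ j k, x j + y k ≠ 0) :
    (of fun j k => (x j + y k)⁻¹).det * (of fun j k => (x j + y k)⁻¹).permanent
      = (of fun j k => ((x j + y k) ^ 2)⁻¹).det := by
  have key : (of fun j k => (x j + y k)⁻¹).det * (of fun j k => (x j + y k)⁻¹).permanent
      = ∑ π : Equiv.Perm ι, (of fun r c => (x r + y c)⁻¹ * (x (π r) + y c)⁻¹).det := by
    simp only [det_apply', permanent, sum_mul]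
    rw [sum_comm]
    refine sum_congr rfl fun σ _ => ?_
    rw [mul_sum, ← Equiv.sum_comp (Equiv.mulRight σ)]
    refine sum_congr rfl fun π _ => ?_
    simp [prod_mul_distrib, mul_assoc]
  rw [key, Fintype.sum_eq_single 1]
  · congr 1
    ext j k
    simp [sq]
  · intro π hπ
    rw [← exists_vecMul_eq_zero_iff]
    refine ⟨fun r => x (π r) - x r, ?_, ?_⟩
    · intro h0
      refine hπ (Equiv.ext fun r => hx ?_)
      simpa [sub_eq_zero] using congrFun h0 r
    · ext c
      have e : ∀ r, (x (π r) - x r) * ((x r + y c)⁻¹ * (x (π r) + y c)⁻¹)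
          = (x r + y c)⁻¹ - (x (π r) + y c)⁻¹ := by
        intro r
        have h1 := h r c
        have h2 := h (π r) c
        field_simp
        ring
      simp only [vecMul, dotProduct, of_apply, e, sum_sub_distrib, Pi.zero_apply]
      rw [Equiv.sum_comp π fun r => (x r + y c)⁻¹, sub_self]

theorem det_of_expansion {K : Type*} [Field K] {n : ℕ} (x e c : Fin n → K) :
    (of fun j k => (∑ i : Fin n, c i * (x j * (x k)⁻¹) ^ (i : ℕ)) * e k).det
      = (vandermonde x).det * (∏ i, c i) * (vandermonde fun k => (x k)⁻¹).det * ∏ k, e k := by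
  have : (of fun j k => (∑ i : Fin n, c i * (x j * (x k)⁻¹) ^ (i : ℕ)) * e k)
      = vandermonde x * diagonal c * (vandermonde fun k => (x k)⁻¹)ᵀ * diagonal e := by
    ext j k
    rw [mul_diagonal, Matrix.mul_apply]
    simp only [of_apply, mul_diagonal, vandermonde_apply, transpose_apply]
    congr 1
    refine sum_congr rfl fun i _ => ?_
    rw [mul_pow]
    ring
  rw [this]
  simp [det_mul, det_diagonal, det_transpose]

theorem sum_arith_geom {K : Type*} [Field K] (a s : K) (m : ℕ) :
    (1 - s) ^ 2 * ∑ i ∈ range m, (a + 2 * i) * s ^ i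
      = a + (2 - a) * s - (a + 2 * m) * s ^ m + (a + 2 * m - 2) * s ^ (m + 1) := by
  induction m with
  | zero =>
    simp
    ring
  | succ m ih =>
    rw [sum_range_succ, mul_add, ih]
    push_cast
    ring

/-- The permanent over the `n`-th roots of unity, `n` odd. The product of these roots is `1`, a fact
taken as the hypothesis `hprod`; it removes the factors `1 / x k` and `1 / (x k)²` split off from
the columns of the two matrices in Borchardt's identity. -/
theorem permanent_inv_add_of_pow_eq_one {K : Type*} [Field K] {n : ℕ} (hn : Odd n)
    (h2 : (2 : K) ≠ 0) (x : Fin n → K) (hx : Function.Injective x) (hpow : ∀ j, x j ^ n = 1)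
    (hprod : ∏ j, x j = 1) (h : ∀ j k, x j + x k ≠ 0) :
    (of fun j k => (x j + x k)⁻¹).permanent = ∏ i : Fin n, (2 - n + 2 * (i : ℕ) : K) / 2 := by
  have h4 : (4 : K) ≠ 0 := by
    have : (4 : K) = 2 * 2 := by norm_num
    rw [this]
    exact mul_ne_zero h2 h2
  have hx0 : ∀ j, x j ≠ 0 := by
    intro j hj
    have := hpow j
    rw [hj, zero_pow hn.pos.ne'] at this
    exact zero_ne_one this
  have hs : ∀ j k, (-(x j * (x k)⁻¹)) ^ n = -1 := by
    intro j k
    rw [hn.neg_pow, mul_pow, inv_pow, hpow, hpow]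
    simp
  have e1 : (of fun j k => (x j + x k)⁻¹) = of fun j k =>
      (∑ i : Fin n, ((-1) ^ (i : ℕ) / 2) * (x j * (x k)⁻¹) ^ (i : ℕ)) * (x k)⁻¹ := by
    ext j k
    have g := mul_neg_geom_sum (-(x j * (x k)⁻¹)) n
    rw [hs] at g
    have t : ∑ i : Fin n, ((-1 : K) ^ (i : ℕ) / 2) * (x j * (x k)⁻¹) ^ (i : ℕ)
        = (∑ i ∈ range n, (-(x j * (x k)⁻¹)) ^ i) / 2 := by
      rw [sum_div, ← Fin.sum_univ_eq_sum_range (fun i => (-(x j * (x k)⁻¹)) ^ i / 2)]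
      refine sum_congr rfl fun i _ => ?_
      rw [neg_pow (x j * (x k)⁻¹)]
      ring
    simp only [of_apply]
    rw [t]
    have hk := hx0 k
    have u : 1 - -(x j * (x k)⁻¹) = (x j + x k) * (x k)⁻¹ := by field_simp; ring
    rw [u] at g
    refine inv_eq_of_mul_eq_one_right ?_
    field_simp at g ⊢
    linear_combination g
  have e2 : (of fun j k => ((x j + x k) ^ 2)⁻¹) = of fun j k =>
      (∑ i : Fin n, ((-1) ^ (i : ℕ) * (2 - n + 2 * (i : ℕ)) / 4) * (x j * (x k)⁻¹) ^ (i : ℕ))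
        * ((x k) ^ 2)⁻¹ := by
    ext j k
    have g := sum_arith_geom (2 - n : K) (-(x j * (x k)⁻¹)) n
    rw [pow_succ _ n, hs] at g
    have t : ∑ i : Fin n, ((-1 : K) ^ (i : ℕ) * (2 - n + 2 * (i : ℕ)) / 4)
          * (x j * (x k)⁻¹) ^ (i : ℕ)
        = (∑ i ∈ range n, (2 - n + 2 * i) * (-(x j * (x k)⁻¹)) ^ i) / 4 := by
      rw [sum_div, ← Fin.sum_univ_eq_sum_range
        (fun i => (2 - n + 2 * i : K) * (-(x j * (x k)⁻¹)) ^ i / 4)]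
      refine sum_congr rfl fun i _ => ?_
      rw [neg_pow (x j * (x k)⁻¹)]
      ring
    simp only [of_apply]
    rw [t]
    have hk := hx0 k
    have u : 1 - -(x j * (x k)⁻¹) = (x j + x k) * (x k)⁻¹ := by field_simp; ring
    rw [u] at g
    refine inv_eq_of_mul_eq_one_right ?_
    generalize (∑ i ∈ range n, (2 - n + 2 * i : K) * (-(x j * (x k)⁻¹)) ^ i) = S at g ⊢
    have g' : ((x j + x k) * (x k)⁻¹) ^ 2 * S = 4 := by rw [g]; ring
    calc (x j + x k) ^ 2 * (S / 4 * (x k ^ 2)⁻¹)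
        = (((x j + x k) * (x k)⁻¹) ^ 2 * S) / 4 := by rw [mul_pow, inv_pow]; ring
      _ = 1 := by rw [g', div_self h4]
  have B := det_mul_permanent_cauchy x x hx h
  have d1 := det_of_expansion x (fun k => (x k)⁻¹) fun i => (-1) ^ (i : ℕ) / 2
  have d2 := det_of_expansion x (fun k => ((x k) ^ 2)⁻¹)
    fun i => (-1) ^ (i : ℕ) * (2 - n + 2 * (i : ℕ)) / 4
  rw [← e1, prod_inv_distrib, hprod, inv_one, mul_one] at d1
  rw [← e2, prod_inv_distrib, prod_pow, hprod, one_pow, inv_one, mul_one] at d2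
  have hc : ∏ i : Fin n, ((-1 : K) ^ (i : ℕ) * (2 - n + 2 * (i : ℕ)) / 4)
      = (∏ i : Fin n, (-1 : K) ^ (i : ℕ) / 2) * ∏ i : Fin n, (2 - n + 2 * (i : ℕ) : K) / 2 := by
    rw [← prod_mul_distrib]
    refine prod_congr rfl fun i _ => ?_
    field_simp
    ring
  have hV : (vandermonde x).det ≠ 0 := det_vandermonde_ne_zero_iff.mpr hx
  have hW : (vandermonde fun k => (x k)⁻¹).det ≠ 0 :=
    det_vandermonde_ne_zero_iff.mpr (inv_injective.comp hx)
  have hC : ∏ i : Fin n, (-1 : K) ^ (i : ℕ) / 2 ≠ 0 :=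
    prod_ne_zero_iff.mpr fun i _ => div_ne_zero (pow_ne_zero _ (neg_ne_zero.mpr one_ne_zero)) h2
  have hd : (of fun j k => (x j + x k)⁻¹).det ≠ 0 := by
    rw [d1]
    exact mul_ne_zero (mul_ne_zero hV hC) hW
  refine mul_left_cancel₀ hd ?_
  rw [B, d1, d2, hc]
  ring

/-- The splitting of Wilson's theorem: `k! (p - 1 - k)! = (-1)^(k + 1)` modulo `p`. -/
theorem factorial_mul_factorial_zmod (p : ℕ) [Fact p.Prime] (k m : ℕ) (h : k + m + 1 = p) :
    (Nat.factorial k : ZMod p) * (Nat.factorial m : ZMod p) = (-1) ^ (k + 1) := by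
  induction k generalizing m with
  | zero =>
    have := ZMod.wilsons_lemma p
    rw [show p - 1 = m by omega] at this
    simp [this]
  | succ k ih =>
    have h0 : ((k + 1 : ℕ) : ZMod p) + ((m + 1 : ℕ) : ZMod p) = 0 := by
      rw [← Nat.cast_add, show k + 1 + (m + 1) = p by omega, ZMod.natCast_self]
    have := ih (m + 1) (by omega)
    rw [Nat.factorial_succ] at this ⊢
    push_cast at this h0 ⊢
    rw [pow_succ]
    linear_combination (Nat.factorial k : ZMod p) * (Nat.factorial m : ZMod p) * h0 - this


/-- Let `p ≡ 3 (mod 4)` be a prime. In `ℤ/pℤ`, every `j² + k²` with `1 ≤ j,k ≤ (p-1)/2`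
is nonzero, and
`4 * (((p+1)/4)!)² * per [(j² + k²)⁻¹]_{1 ≤ j,k ≤ (p-1)/2} = (-1)^((p+1)/4)` in `ℤ/pℤ`. -/
theorem permanent_inv_sq_add_sq_zmod (p : ℕ) (hp : p.Prime) (hp4 : p % 4 = 3) :
    (∀ j k : Fin ((p - 1) / 2),
        (((j : ℕ) + 1 : ZMod p) ^ 2 + ((k : ℕ) + 1 : ZMod p) ^ 2) ≠ 0) ∧
    4 * (Nat.factorial ((p + 1) / 4) : ZMod p) ^ 2 *
        (Matrix.of fun j k : Fin ((p - 1) / 2) =>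
          (((j : ℕ) + 1 : ZMod p) ^ 2 + ((k : ℕ) + 1 : ZMod p) ^ 2)⁻¹).permanent
      = (-1 : ZMod p) ^ ((p + 1) / 4) := by
  have := Fact.mk hp
  obtain ⟨r, rfl⟩ : ∃ r, p = 4 * r + 3 := ⟨p / 4, by omega⟩
  rw [show (4 * r + 3 - 1) / 2 = 2 * r + 1 by omega, show (4 * r + 3 + 1) / 4 = r + 1 by omega]
  have hp0 : (4 * r + 3 : ZMod (4 * r + 3)) = 0 := by
    exact_mod_cast ZMod.natCast_self (4 * r + 3)
  have hlt : ∀ m : ℕ, 0 < m → m < 4 * r + 3 → (m : ZMod (4 * r + 3)) ≠ 0 := by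
    intro m h0 h1 h
    rw [ZMod.natCast_eq_zero_iff] at h
    exact absurd (Nat.le_of_dvd h0 h) (by omega)
  have h2 : (2 : ZMod (4 * r + 3)) ≠ 0 := by exact_mod_cast hlt 2 (by omega) (by omega)
  have ha : ∀ j : Fin (2 * r + 1), ((j : ℕ) + 1 : ZMod (4 * r + 3)) ≠ 0 := by
    intro j
    exact_mod_cast hlt (j + 1) (by omega) (by omega)
  have hpow : ∀ j : Fin (2 * r + 1),
      (((j : ℕ) + 1 : ZMod (4 * r + 3)) ^ 2) ^ (2 * r + 1) = 1 := by
    intro j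
    rw [← pow_mul, show 2 * (2 * r + 1) = 4 * r + 3 - 1 by omega]
    exact ZMod.pow_card_sub_one_eq_one (ha j)
  have hodd : Odd (2 * r + 1) := ⟨r, rfl⟩
  -- If `x = -y` with `x ^ n = y ^ n = 1` and `n` odd, then `1 = -1`.
  have hne : ∀ j k : Fin (2 * r + 1),
      ((j : ℕ) + 1 : ZMod (4 * r + 3)) ^ 2 + ((k : ℕ) + 1 : ZMod (4 * r + 3)) ^ 2 ≠ 0 := by
    intro j k h
    have h1 := hpow j
    rw [eq_neg_of_add_eq_zero_left h, hodd.neg_pow, hpow k] at h1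
    exact h2 (by linear_combination -h1)
  refine ⟨hne, ?_⟩
  have hinj : Function.Injective
      fun j : Fin (2 * r + 1) => ((j : ℕ) + 1 : ZMod (4 * r + 3)) ^ 2 := by
    intro j k h
    rcases sq_eq_sq_iff_eq_or_eq_neg.mp h with h | h
    · have h' : ((j : ℕ) : ZMod (4 * r + 3)) = ((k : ℕ) : ZMod (4 * r + 3)) := by
        linear_combination h
      rw [ZMod.natCast_eq_natCast_iff'] at h'
      rw [Nat.mod_eq_of_lt (by omega), Nat.mod_eq_of_lt (by omega)] at h'
      exact Fin.ext h'
    · refine absurd ?_ (hlt (j + k + 2) (by omega) (by omega))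
      push_cast
      linear_combination h
  have hprod : ∏ j : Fin (2 * r + 1), ((j : ℕ) + 1 : ZMod (4 * r + 3)) ^ 2 = 1 := by
    have w := factorial_mul_factorial_zmod (4 * r + 3) (2 * r + 1) (2 * r + 1) (by omega)
    have f : ∏ j : Fin (2 * r + 1), ((j : ℕ) + 1 : ZMod (4 * r + 3))
        = (Nat.factorial (2 * r + 1) : ZMod (4 * r + 3)) := by
      rw [Fin.prod_univ_eq_prod_range (fun i => (i + 1 : ZMod (4 * r + 3))),
        ← prod_range_add_one_eq_factorial]
      push_cast
      rfl
    rw [prod_pow, f, sq, w, Even.neg_one_pow ⟨r + 1, by ring⟩]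
  rw [permanent_inv_add_of_pow_eq_one hodd h2 _ hinj hpow hprod hne]
  -- `(2 - n + 2 i) / 2 = q + 1 + i` with `n = 2 r + 1` and `q = r + 1`, as `4 r + 3 = 0`.
  have hfac : ∏ i : Fin (2 * r + 1),
      (2 - ((2 * r + 1 : ℕ) : ZMod (4 * r + 3)) + 2 * ((i : ℕ) : ZMod (4 * r + 3))) / 2
      = ((r + 1 + 1).ascFactorial (2 * r + 1) : ZMod (4 * r + 3)) := by
    rw [Nat.ascFactorial_eq_prod_range, Nat.cast_prod, ← Fin.prod_univ_eq_prod_range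
      (fun i => ((r + 1 + 1 + i : ℕ) : ZMod (4 * r + 3)))]
    refine prod_congr rfl fun i _ => ?_
    rw [div_eq_iff h2]
    push_cast
    linear_combination -hp0
  rw [hfac]
  have hA : (Nat.factorial (r + 1) : ZMod (4 * r + 3))
      * ((r + 1 + 1).ascFactorial (2 * r + 1) : ZMod (4 * r + 3))
      = (Nat.factorial (3 * r + 2) : ZMod (4 * r + 3)) := by
    rw [← Nat.cast_mul, Nat.factorial_mul_ascFactorial]
    congr 2
    omega
  have w := factorial_mul_factorial_zmod (4 * r + 3) r (3 * r + 2) (by omega)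
  have hs : (Nat.factorial (r + 1) : ZMod (4 * r + 3)) = (r + 1) * (Nat.factorial r) := by
    rw [Nat.factorial_succ]
    push_cast
    rfl
  calc _ = 4 * (Nat.factorial (r + 1) : ZMod (4 * r + 3))
        * (Nat.factorial (3 * r + 2) : ZMod (4 * r + 3)) := by rw [← hA]; ring
    _ = _ := by
      rw [hs]
      linear_combination (4 * r + 4 : ZMod (4 * r + 3)) * w + (-1) ^ (r + 1) * hp0
end
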